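/- Let 0 ≤ b' < 1/2 and 0 ≤ b ≤ 1 with b + b' ≤ 1, and let A > 0. Let K : ℝ² → ℂ be measurable and satisfy |K(λ,μ)| ≤ (A/⟨μ⟩) · (1/⟨λ⟩² + 1/⟨λ−μ⟩²) for all (λ,μ) ∈ ℝ². Then there is a constant C = C(b,b') > 0 such that for every measurable g : ℝ → ℂ with ‖⟨μ⟩^{−b'} g(μ)‖_{L²_μ} < ∞, the integral (Tg)(λ) := ∫_ℝ K(λ,μ) g(μ) dμ converges absolutely for every λ, and ‖⟨λ⟩^{b} (Tg)(λ)‖_{L²_λ} ≤ C · A · ‖⟨μ⟩^{−b'} g(μ)‖_{L²_μ}. -/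

import Mathlib

/-!
Write `f(μ) = ⟨μ⟩^{-b'} |g(μ)|`, so that the right-hand norm is the `L²` norm of `f`. From
`⟨λ⟩ ≤ ⟨μ⟩ + ⟨λ-μ⟩`, the subadditivity of `x ↦ x^b` and `b ≤ 1`, `b + b' ≤ 1`, one gets
(`kernel_pointwise`)

`⟨λ⟩^b |K(λ,μ) g(μ)| ≤ A (⟨λ⟩⁻¹ ⟨μ⟩^{b'-1} + ⟨λ-μ⟩⁻² + ⟨μ⟩^{b'-1} ⟨λ-μ⟩⁻¹) f(μ)`.

Both `⟨·⟩⁻¹` and, because `b' < 1/2`, `⟨·⟩^{b'-1}` are in `L²`. Hence the first and third kernels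
are Hilbert–Schmidt, while the second is convolution with the integrable function `⟨·⟩⁻²`; all three
are bounded on `L²` (`lintegral_sq_three_kernels`). The Cauchy–Schwarz inequality for fixed `λ` also
gives absolute convergence of the integral.
-/

noncomputable section

open MeasureTheory
open scoped ENNReal

/-- Japanese bracket of a real number: `⟨x⟩ = (1 + x²)^{1/2}`. -/
def jb (x : ℝ) : ℝ := Real.sqrt (1 + x ^ 2)

lemma jb_one_le (x : ℝ) : 1 ≤ jb x := by
  unfold jb
  rw [Real.one_le_sqrt]
  nlinarith [sq_nonneg x]

lemma jb_pos (x : ℝ) : 0 < jb x := one_pos.trans_le (jb_one_le x)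

lemma jb_sq (x : ℝ) : jb x ^ 2 = 1 + x ^ 2 := Real.sq_sqrt (by positivity)

lemma measurable_jb : Measurable jb := by
  unfold jb
  fun_prop

lemma jb_le_add (l m : ℝ) : jb l ≤ jb m + jb (l - m) := by
  have h1 := jb_pos m
  have h2 := jb_pos (l - m)
  have hm : |m| ≤ jb m := abs_le_of_sq_le_sq (by rw [jb_sq]; linarith) h1.le
  have hd : |l - m| ≤ jb (l - m) :=
    abs_le_of_sq_le_sq (by rw [jb_sq]; linarith) h2.le
  have hprod : m * (l - m) ≤ jb m * jb (l - m) :=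
    (le_abs_self _).trans (by rw [abs_mul]; gcongr)
  refine le_of_sq_le_sq ?_ (by positivity)
  nlinarith [jb_sq l, jb_sq m, jb_sq (l - m)]

/-- The weighted kernel is dominated by two Hilbert–Schmidt kernels and a convolution kernel. -/
lemma kernel_pointwise {b b' A : ℝ} (hb0 : 0 ≤ b) (hb1 : b ≤ 1) (hbb' : b + b' ≤ 1) (hA : 0 < A)
    (l m k G : ℝ) (hG : 0 ≤ G) (hk : k ≤ A / jb m * (1 / jb l ^ 2 + 1 / jb (l - m) ^ 2)) :
    jb l ^ b * (k * G) ≤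
      A * (((jb l)⁻¹ * jb m ^ (b' - 1) + (jb (l - m))⁻¹ ^ 2 + jb m ^ (b' - 1) * (jb (l - m))⁻¹)
        * (jb m ^ (-b') * G)) := by
  have hL := jb_pos l
  have hm := jb_pos m
  have hd := jb_pos (l - m)
  have e1 : jb m ^ (b' - 1) * jb m ^ (-b') = (jb m)⁻¹ := by
    rw [← Real.rpow_add hm, ← Real.rpow_neg_one]
    congr 1
    ring
  have h1 : jb l ^ b ≤ jb l := by
    simpa using Real.rpow_le_rpow_of_exponent_le (jb_one_le l) hb1
  have h2 : jb (l - m) ^ b ≤ jb (l - m) := by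
    simpa using Real.rpow_le_rpow_of_exponent_le (jb_one_le (l - m)) hb1
  have h3 : jb m ^ b ≤ jb m * jb m ^ (-b') := by
    have : jb m * jb m ^ (-b') = jb m ^ (1 - b') := by
      rw [sub_eq_add_neg, Real.rpow_add hm, Real.rpow_one]
    rw [this]
    exact Real.rpow_le_rpow_of_exponent_le (jb_one_le m) (by linarith)
  have h4 : jb l ^ b ≤ jb m * jb m ^ (-b') + jb (l - m) := by
    calc jb l ^ b ≤ (jb m + jb (l - m)) ^ b := Real.rpow_le_rpow hL.le (jb_le_add l m) hb0
      _ ≤ jb m ^ b + jb (l - m) ^ b := Real.rpow_add_le_add_rpow hm.le hd.le hb0 hb1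
      _ ≤ _ := add_le_add h3 h2
  calc jb l ^ b * (k * G)
      ≤ jb l ^ b * ((A / jb m * (1 / jb l ^ 2 + 1 / jb (l - m) ^ 2)) * G) := by gcongr
    _ = A * G * (jb m)⁻¹ * (jb l ^ b * (jb l)⁻¹ ^ 2 + jb l ^ b * (jb (l - m))⁻¹ ^ 2) := by
        simp only [div_eq_mul_inv, inv_pow]
        ring
    _ ≤ A * G * (jb m)⁻¹ * (jb l * (jb l)⁻¹ ^ 2 +
          (jb m * jb m ^ (-b') + jb (l - m)) * (jb (l - m))⁻¹ ^ 2) := by gcongr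
    _ = A * G * ((jb m)⁻¹ * (jb l)⁻¹ + jb m ^ (-b') * (jb (l - m))⁻¹ ^ 2
          + (jb m)⁻¹ * (jb (l - m))⁻¹) := by
        field_simp
        ring
    _ = _ := by
        rw [← e1]
        ring

lemma lintegral_jb_inv_sq_lt_top : ∫⁻ x : ℝ, ENNReal.ofReal ((jb x)⁻¹) ^ 2 < ⊤ := by
  have h := integrable_inv_one_add_sq.lintegral_lt_top
  refine lt_of_eq_of_lt (lintegral_congr fun x => ?_) h
  rw [← ENNReal.ofReal_pow (inv_nonneg.2 (jb_pos x).le), inv_pow, jb_sq]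

lemma lintegral_jb_rpow_sq_lt_top {b' : ℝ} (hb' : b' < 1 / 2) :
    ∫⁻ x : ℝ, ENNReal.ofReal (jb x ^ (b' - 1)) ^ 2 < ⊤ := by
  have h := (integrable_rpow_neg_one_add_norm_sq (E := ℝ) (μ := volume) (r := 2 - 2 * b')
    (by simp; linarith)).lintegral_lt_top
  refine lt_of_eq_of_lt (lintegral_congr fun x => ?_) h
  rw [← ENNReal.ofReal_pow (Real.rpow_nonneg (jb_pos x).le _), ← Real.rpow_mul_natCast (jb_pos x).le,
    Real.norm_eq_abs, sq_abs, ← jb_sq, ← Real.rpow_natCast_mul (jb_pos x).le]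
  congr 2
  push_cast
  ring

/-- Cauchy–Schwarz in squared form. -/
lemma lintegral_mul_sq_le {u f : ℝ → ℝ≥0∞} (hu : Measurable u) (hf : Measurable f) :
    (∫⁻ x, u x * f x) ^ 2 ≤ (∫⁻ x, u x ^ 2) * ∫⁻ x, f x ^ 2 := by
  have h := ENNReal.lintegral_mul_le_Lp_mul_Lq volume Real.HolderConjugate.two_two
    hu.aemeasurable hf.aemeasurable
  have h' := pow_le_pow_left' h 2
  have e (z : ℝ≥0∞) : (z ^ ((1 : ℝ) / 2)) ^ 2 = z := by
    rw [← ENNReal.rpow_natCast, ← ENNReal.rpow_mul]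
    norm_num
  simpa [mul_pow, e, ENNReal.rpow_two, ← one_div] using h'

lemma add_three_sq_le (x y z : ℝ≥0∞) : (x + y + z) ^ 2 ≤ 3 * (x ^ 2 + y ^ 2 + z ^ 2) := by
  rcases eq_or_ne x ⊤ with rfl | hx
  · simp
  rcases eq_or_ne y ⊤ with rfl | hy
  · simp
  rcases eq_or_ne z ⊤ with rfl | hz
  · simp
  lift x to NNReal using hx
  lift y to NNReal using hy
  lift z to NNReal using hz
  norm_cast
  rw [← NNReal.coe_le_coe]
  push_cast
  nlinarith [sq_nonneg ((x : ℝ) - y), sq_nonneg ((y : ℝ) - z), sq_nonneg ((x : ℝ) - z)]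

/-- Cauchy–Schwarz for fixed `l`. In the convolution term `W(l - m)² f(m)` is split as
`W(l - m) * (W(l - m) f(m))`, so that the bound can still be integrated in `l`. -/
lemma sq_lintegral_le {W V f : ℝ → ℝ≥0∞} (hW : Measurable W) (hV : Measurable V)
    (hf : Measurable f) (l : ℝ) :
    (∫⁻ m, (W l * V m + W (l - m) ^ 2 + V m * W (l - m)) * f m) ^ 2 ≤
      3 * (W l ^ 2 * ((∫⁻ m, V m ^ 2) * ∫⁻ m, f m ^ 2)
        + (∫⁻ m, W m ^ 2) * (∫⁻ m, W (l - m) ^ 2 * f m ^ 2)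
        + (∫⁻ m, W (l - m) ^ 2 * V m ^ 2) * ∫⁻ m, f m ^ 2) := by
  have hWl : Measurable fun m => W (l - m) := by fun_prop
  have e : (∫⁻ m, (W l * V m + W (l - m) ^ 2 + V m * W (l - m)) * f m) =
      W l * (∫⁻ m, V m * f m) + (∫⁻ m, W (l - m) * (W (l - m) * f m))
        + ∫⁻ m, (W (l - m) * V m) * f m := by
    rw [← lintegral_const_mul _ (by fun_prop), ← lintegral_add_left (by fun_prop),
      ← lintegral_add_left (by fun_prop)]
    refine lintegral_congr fun m => ?_
    ring
  rw [e]
  refine (add_three_sq_le _ _ _).trans ?_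
  gcongr
  · rw [mul_pow]
    gcongr
    exact lintegral_mul_sq_le hV hf
  · refine (lintegral_mul_sq_le hWl (hWl.mul hf)).trans_eq ?_
    rw [lintegral_sub_left_eq_self (fun m => W m ^ 2) l]
    simp only [Pi.mul_apply, mul_pow]
  · refine (lintegral_mul_sq_le (hWl.mul hV) hf).trans_eq ?_
    simp only [Pi.mul_apply, mul_pow]

lemma lintegral_conv {u v : ℝ → ℝ≥0∞} (hu : Measurable u) (hv : Measurable v) :
    ∫⁻ l, ∫⁻ m, u (l - m) * v m = (∫⁻ x, u x) * ∫⁻ x, v x := by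
  rw [lintegral_lintegral_swap (by fun_prop), ← lintegral_const_mul _ hv]
  refine lintegral_congr fun m => ?_
  rw [lintegral_mul_const _ (by fun_prop), lintegral_sub_right_eq_self u m]

/-- `L²` bound for the sum of the three model kernels. -/
lemma lintegral_sq_three_kernels {W V f : ℝ → ℝ≥0∞} (hW : Measurable W) (hV : Measurable V)
    (hf : Measurable f) :
    ∫⁻ l, (∫⁻ m, (W l * V m + W (l - m) ^ 2 + V m * W (l - m)) * f m) ^ 2 ≤
      3 * (2 * ((∫⁻ m, W m ^ 2) * ∫⁻ m, V m ^ 2) + (∫⁻ m, W m ^ 2) ^ 2) * ∫⁻ m, f m ^ 2 := by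
  refine (lintegral_mono fun l => sq_lintegral_le hW hV hf l).trans_eq ?_
  rw [lintegral_const_mul _ (by fun_prop), lintegral_add_left (by fun_prop),
    lintegral_add_left (by fun_prop), lintegral_mul_const _ (by fun_prop),
    lintegral_const_mul _ (by fun_prop), lintegral_mul_const _ (by fun_prop),
    lintegral_conv (hW.pow_const 2) (hf.pow_const 2),
    lintegral_conv (hW.pow_const 2) (hV.pow_const 2)]
  ring

/-- Pointwise finiteness for a bounded weight `W`. -/
lemma lintegral_three_kernels_lt_top {W V f : ℝ → ℝ≥0∞} (hW : Measurable W) (hV : Measurable V)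
    (hf : Measurable f) (hW1 : ∀ x, W x ≤ 1) (hWi : ∫⁻ m, W m ^ 2 < ⊤) (hVi : ∫⁻ m, V m ^ 2 < ⊤)
    (hfi : ∫⁻ m, f m ^ 2 < ⊤) (l : ℝ) :
    ∫⁻ m, (W l * V m + W (l - m) ^ 2 + V m * W (l - m)) * f m < ⊤ := by
  have hle {v : ℝ → ℝ≥0∞} (hv : ∫⁻ m, v m ^ 2 < ⊤) : ∫⁻ m, W (l - m) ^ 2 * v m ^ 2 < ⊤ :=
    (lintegral_mono fun m => mul_le_of_le_one_left' (pow_le_one' (hW1 _) 2)).trans_lt hv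
  have h1 : W l ^ 2 < ⊤ := (pow_le_one' (hW1 l) 2).trans_lt ENNReal.one_lt_top
  have h2 := hle hfi
  have h3 := hle hVi
  rw [← ENNReal.pow_lt_top_iff (n := 2) |>.trans (or_iff_left two_ne_zero)]
  refine (sq_lintegral_le hW hV hf l).trans_lt ?_
  refine ENNReal.mul_lt_top (by simp) (ENNReal.add_lt_top.2 ⟨ENNReal.add_lt_top.2 ⟨?_, ?_⟩, ?_⟩)
  · exact ENNReal.mul_lt_top h1 (ENNReal.mul_lt_top hVi hfi)
  · exact ENNReal.mul_lt_top hWi h2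
  · exact ENNReal.mul_lt_top h3 hfi

/-- Lemma 3.4: a linear integral operator whose time-frequency kernel satisfies
`|K(λ,μ)| ≤ (A/⟨μ⟩)(⟨λ⟩⁻² + ⟨λ-μ⟩⁻²)` is bounded from `H^{-b'}(ℝ)` to `H^{b}(ℝ)`
for `0 ≤ b' < 1/2`, `0 ≤ b ≤ 1`, `b + b' ≤ 1`. -/
theorem kernel_Hb_bound (b b' A : ℝ) (hb'0 : 0 ≤ b') (hb' : b' < 1 / 2)
    (hb0 : 0 ≤ b) (hb1 : b ≤ 1) (hbb' : b + b' ≤ 1) (hA : 0 < A) :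
    ∃ C > (0 : ℝ), ∀ K : ℝ → ℝ → ℂ, Measurable (Function.uncurry K) →
      (∀ l μ : ℝ, ‖K l μ‖ ≤ A / jb μ * (1 / jb l ^ 2 + 1 / jb (l - μ) ^ 2)) →
      ∀ g : ℝ → ℂ, Measurable g →
        (∫⁻ μ : ℝ, ENNReal.ofReal ((jb μ ^ (-b') * ‖g μ‖) ^ 2)) < ⊤ →
        (∀ l : ℝ, Integrable fun μ : ℝ => K l μ * g μ) ∧
        (∫⁻ l : ℝ, ENNReal.ofReal ((jb l ^ b * ‖∫ μ : ℝ, K l μ * g μ‖) ^ 2)) ^ ((1 : ℝ) / 2)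
          ≤ ENNReal.ofReal (C * A) *
            (∫⁻ μ : ℝ, ENNReal.ofReal ((jb μ ^ (-b') * ‖g μ‖) ^ 2)) ^ ((1 : ℝ) / 2) := by
  have hjm := measurable_jb
  set W : ℝ → ℝ≥0∞ := fun x => ENNReal.ofReal ((jb x)⁻¹) with hWdef
  set V : ℝ → ℝ≥0∞ := fun x => ENNReal.ofReal (jb x ^ (b' - 1)) with hVdef
  have hW : Measurable W := by fun_prop
  have hV : Measurable V := by fun_prop
  have hW1 (x : ℝ) : W x ≤ 1 := by
    simpa [hWdef] using inv_le_one_of_one_le₀ (jb_one_le x)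
  have hWi : ∫⁻ m, W m ^ 2 < ⊤ := lintegral_jb_inv_sq_lt_top
  have hVi : ∫⁻ m, V m ^ 2 < ⊤ := lintegral_jb_rpow_sq_lt_top hb'
  set D : ℝ≥0∞ := 3 * (2 * ((∫⁻ m, W m ^ 2) * ∫⁻ m, V m ^ 2) + (∫⁻ m, W m ^ 2) ^ 2) with hD
  have hDtop : D ≠ ⊤ := by
    refine ENNReal.mul_ne_top (by simp) (ENNReal.add_ne_top.2 ⟨?_, ENNReal.pow_ne_top hWi.ne⟩)
    exact ENNReal.mul_ne_top (by simp) (ENNReal.mul_ne_top hWi.ne hVi.ne)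
  -- The shift by `1` makes the constant positive and at least `√D`.
  refine ⟨D.toReal + 1, by positivity, fun K hK hKb g hg hgi => ?_⟩
  set f : ℝ → ℝ≥0∞ := fun m => ENNReal.ofReal (jb m ^ (-b') * ‖g m‖) with hfdef
  have hf : Measurable f := by fun_prop
  have hf2 : (∫⁻ m : ℝ, ENNReal.ofReal ((jb m ^ (-b') * ‖g m‖) ^ 2)) = ∫⁻ m, f m ^ 2 := by
    refine lintegral_congr fun m => ?_
    rw [ENNReal.ofReal_pow (mul_nonneg (Real.rpow_nonneg (jb_pos m).le _) (norm_nonneg _))]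
  rw [hf2] at hgi ⊢
  have hpt (l m : ℝ) : ENNReal.ofReal (jb l ^ b) * ‖K l m * g m‖ₑ ≤
      ENNReal.ofReal A * ((W l * V m + W (l - m) ^ 2 + V m * W (l - m)) * f m) := by
    have h := kernel_pointwise hb0 hb1 hbb' hA l m ‖K l m‖ ‖g m‖ (norm_nonneg _) (hKb l m)
    have hL := jb_pos l
    have hm := jb_pos m
    have hd := jb_pos (l - m)
    have h' := ENNReal.ofReal_le_ofReal h
    rw [ENNReal.ofReal_mul (by positivity), ENNReal.ofReal_mul hA.le,
      ENNReal.ofReal_mul (q := jb m ^ (-b') * ‖g m‖) (by positivity),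
      ENNReal.ofReal_add (by positivity) (by positivity),
      ENNReal.ofReal_add (by positivity) (by positivity),
      ENNReal.ofReal_mul (p := (jb l)⁻¹) (by positivity),
      ENNReal.ofReal_pow (by positivity),
      ENNReal.ofReal_mul (p := jb m ^ (b' - 1)) (by positivity)] at h'
    rwa [← ofReal_norm, norm_mul]
  have hint (l : ℝ) : ENNReal.ofReal (jb l ^ b) * ∫⁻ m, ‖K l m * g m‖ₑ ≤
      ENNReal.ofReal A * ∫⁻ m, (W l * V m + W (l - m) ^ 2 + V m * W (l - m)) * f m := by
    rw [← lintegral_const_mul' _ _ ENNReal.ofReal_ne_top,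
      ← lintegral_const_mul' _ _ ENNReal.ofReal_ne_top]
    exact lintegral_mono fun m => hpt l m
  constructor
  · intro l
    have hKl : Measurable (K l) := hK.comp measurable_prodMk_left
    refine ⟨(hKl.mul hg).aestronglyMeasurable, ?_⟩
    have h1 : (1 : ℝ≥0∞) ≤ ENNReal.ofReal (jb l ^ b) :=
      ENNReal.one_le_ofReal.2 (Real.one_le_rpow (jb_one_le l) hb0)
    exact ((le_mul_of_one_le_left' h1).trans (hint l)).trans_lt
      (ENNReal.mul_lt_top ENNReal.ofReal_lt_top
        (lintegral_three_kernels_lt_top hW hV hf hW1 hWi hVi hgi l))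
  · have hmain : (∫⁻ l : ℝ, ENNReal.ofReal ((jb l ^ b * ‖∫ m : ℝ, K l m * g m‖) ^ 2)) ≤
        ENNReal.ofReal ((D.toReal + 1) * A) ^ 2 * ∫⁻ m, f m ^ 2 := by
      calc (∫⁻ l : ℝ, ENNReal.ofReal ((jb l ^ b * ‖∫ m : ℝ, K l m * g m‖) ^ 2))
          ≤ ∫⁻ l : ℝ, ENNReal.ofReal A ^ 2 *
              (∫⁻ m, (W l * V m + W (l - m) ^ 2 + V m * W (l - m)) * f m) ^ 2 := by
            refine lintegral_mono fun l => ?_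
            have hp := Real.rpow_nonneg (jb_pos l).le b
            rw [ENNReal.ofReal_pow (mul_nonneg hp (norm_nonneg _)), ENNReal.ofReal_mul hp,
              ofReal_norm, ← mul_pow]
            exact pow_le_pow_left' ((mul_le_mul_right (enorm_integral_le_lintegral_enorm _) _).trans
              (hint l)) 2
        _ = ENNReal.ofReal A ^ 2 * ∫⁻ l : ℝ,
              (∫⁻ m, (W l * V m + W (l - m) ^ 2 + V m * W (l - m)) * f m) ^ 2 :=
            lintegral_const_mul' _ _ (ENNReal.pow_ne_top ENNReal.ofReal_ne_top)
        _ ≤ ENNReal.ofReal A ^ 2 * (D * ∫⁻ m, f m ^ 2) := by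
            gcongr
            exact lintegral_sq_three_kernels hW hV hf
        _ ≤ ENNReal.ofReal A ^ 2 * (ENNReal.ofReal (D.toReal + 1) ^ 2 * ∫⁻ m, f m ^ 2) := by
            gcongr
            have h0 : 0 ≤ D.toReal := ENNReal.toReal_nonneg
            rw [← ENNReal.ofReal_pow (by positivity)]
            conv_lhs => rw [← ENNReal.ofReal_toReal hDtop]
            exact ENNReal.ofReal_le_ofReal (by nlinarith)
        _ = _ := by
            rw [ENNReal.ofReal_mul (by positivity)]
            ring
    refine (ENNReal.rpow_le_rpow hmain (by norm_num)).trans_eq ?_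
    rw [ENNReal.mul_rpow_of_nonneg _ _ (by norm_num), ← ENNReal.rpow_natCast, ← ENNReal.rpow_mul]
    norm_num
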